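/- Lemma 10: run Algorithm 2 with the Borda rule and k manipulators, fix an iteration i (1 ≤ i ≤ ⌈m/2⌉), and let s_{k−1}(c) be the total score of candidate c in F(p⃗ ∪ p⃗_M) after stage k−1. Then the sets of integers {s_{k−1}(u) : u ∈ U^i} and {s_{k−1}(d) : d ∈ D^i} are 1-dense. -/

import Mathlib

open Finset
open scoped Classical

variable {O : Type*} [Fintype O] [DecidableEq O]

/-- A vote is a strict total order on the outcome set `O`, represented by its position
function: `p o` is the number of outcomes that `o` is preferred over, so the most
preferred outcome has position `m - 1` and the least preferred position `0`. -/
def IsVote (p : O → ℕ) : Prop :=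
  Function.Injective p ∧ ∀ o : O, p o < Fintype.card O

/-- The total score of candidate `c` under the scoring vector `sc` (`sc j` is the number
of points awarded to the candidate at position `j`) for the profile `P`. -/
def score (sc : ℕ → ℤ) (P : List (O → ℕ)) (c : O) : ℤ :=
  (P.map fun q => sc (q c)).sum

/-- The positional scoring rule used as a social welfare function: candidates are ordered
by decreasing total score, ties being broken by the fixed strict tie-breaking order `tb`
(a smaller `tb`-value means preferred by the tie-breaking order).  The output is again a
position function: the position of `c` is the number of candidates ranked below `c`. -/
def swf (sc : ℕ → ℤ) (tb : O → ℕ) (P : List (O → ℕ)) : O → ℕ := fun c =>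
  (univ.filter fun c' =>
      score sc P c' < score sc P c ∨ (score sc P c' = score sc P c ∧ tb c < tb c')).card

/-- `topSet p j = A^j(p)`, the set of the `j` most preferred outcomes of `p`. -/
def topSet (p : O → ℕ) (j : ℕ) : Finset O :=
  univ.filter fun o => Fintype.card O - j ≤ p o

/-- The least `j ≥ 1` for which `A^j(p_t) ∩ A^j(p_o)` is nonempty, i.e. the iteration at
which the Rational Compromise rule terminates. -/
noncomputable def rcIndex (pt po : O → ℕ) : ℕ :=
  sInf {j | 1 ≤ j ∧ (topSet pt j ∩ topSet po j).Nonempty}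

/-- The Rational Compromise bargaining rule: `A^j(p_t) ∩ A^j(p_o)` for the least `j ≥ 1`
making this intersection nonempty. -/
noncomputable def RC (pt po : O → ℕ) : Finset O :=
  topSet pt (rcIndex pt po) ∩ topSet po (rcIndex pt po)

/-- The `n` most preferred members of `S` according to the ranking `r`. -/
def topWithin (r : O → ℕ) (S : Finset O) (n : ℕ) : Finset O :=
  S.filter fun o => (S.filter fun o' => r o < r o').card < n

/-- The `n` least preferred members of `S` according to the ranking `r`. -/
def botWithin (r : O → ℕ) (S : Finset O) (n : ℕ) : Finset O :=
  S.filter fun o => (S.filter fun o' => r o' < r o).card < n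

/-- The vote built by the algorithms from a current ranking `r` and a set `H`:
the members of `H` occupy the `|H|` highest positions in reverse order of `r`
(the `r`-least preferred member of `H` is placed highest), and the members of `O ∖ H`
occupy the remaining lowest positions in reverse order of `r` (the `r`-most preferred
of them is placed lowest). -/
def buildVote (r : O → ℕ) (H : Finset O) : O → ℕ := fun o =>
  if o ∈ H then Fintype.card O - H.card + (H.filter fun h => r o < r h).card
  else (univ.filter fun c => c ∉ H ∧ r o < r c).card

/-- `H^i` for the constructive algorithms: the preferred outcome `p` together with the
`i - 1` most preferred outcomes of `p_t` that do not belong to `A^i(p_o)`. -/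
def Hset (pt po : O → ℕ) (p : O) (i : ℕ) : Finset O :=
  insert p (topWithin pt ((univ \ topSet po i).erase p) (i - 1))

/-- `H^i` for the destructive algorithms: `p*`, the most preferred outcome of `p_t` other
than `e` that belongs to `A^i(p_o)`, together with the `i - 1` most preferred outcomes of
`p_t` other than `e` and `p*`. -/
def HsetD (pt po : O → ℕ) (e : O) (i : ℕ) : Finset O :=
  topWithin pt ((topSet po i).erase e) 1 ∪
    topWithin pt ((univ.erase e) \ topWithin pt ((topSet po i).erase e) 1) (i - 1)

/-- The manipulator profile built by Algorithm 2 (for a fixed iteration whose set is `H`)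
after the given number of stages: at each stage one more vote is appended, built from the
current social ranking `F(p⃗ ∪ p⃗_M)`. -/
def stageProfile (sc : ℕ → ℤ) (tb : O → ℕ) (P : List (O → ℕ)) (H : Finset O) :
    ℕ → List (O → ℕ)
  | 0 => []
  | n + 1 =>
      stageProfile sc tb P H n ++
        [buildVote (swf sc tb (P ++ stageProfile sc tb P H n)) H]

/-- The vote constructed by Algorithm 2 at stage `ℓ` (1-indexed). -/
def stageVote (sc : ℕ → ℤ) (tb : O → ℕ) (P : List (O → ℕ)) (H : Finset O) (ℓ : ℕ) :
    O → ℕ :=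
  buildVote (swf sc tb (P ++ stageProfile sc tb P H (ℓ - 1))) H

/-- The sets `U^i_s`:  `U^i_0` consists of the member of `H^i` with the lowest position in
`p_t`, and `U^i_{s+1}` adds every candidate ranked above some member of `U^i_s` by the
stage-`l` vote (`1 ≤ l < k`) but below some member of `U^i_s` by the stage-`(l+1)` vote. -/
noncomputable def Uaux (sc : ℕ → ℤ) (tb : O → ℕ) (P : List (O → ℕ)) (pt : O → ℕ)
    (H : Finset O) (k : ℕ) : ℕ → Finset O
  | 0 => botWithin pt H 1
  | s + 1 =>
      Uaux sc tb P pt H k s ∪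
        univ.filter fun u =>
          ∃ l, 1 ≤ l ∧ l < k ∧
            (∃ u' ∈ Uaux sc tb P pt H k s,
              stageVote sc tb P H l u' < stageVote sc tb P H l u) ∧
            (∃ u' ∈ Uaux sc tb P pt H k s,
              stageVote sc tb P H (l + 1) u < stageVote sc tb P H (l + 1) u')

/-- `U^i = ⋃ₛ U^i_s`. -/
noncomputable def Uset (sc : ℕ → ℤ) (tb : O → ℕ) (P : List (O → ℕ)) (pt : O → ℕ)
    (H : Finset O) (k : ℕ) : Finset O :=
  univ.filter fun u => ∃ s, u ∈ Uaux sc tb P pt H k s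

/-- The sets `D^i_s`: `D^i_0` consists of the member of `O ∖ H^i` with the highest position
in `p_t`, and `D^i_{s+1}` adds every candidate ranked below some member of `D^i_s` by the
stage-`l` vote (`1 ≤ l < k`) but above some member of `D^i_s` by the stage-`(l+1)` vote. -/
noncomputable def Daux (sc : ℕ → ℤ) (tb : O → ℕ) (P : List (O → ℕ)) (pt : O → ℕ)
    (H : Finset O) (k : ℕ) : ℕ → Finset O
  | 0 => topWithin pt (univ \ H) 1
  | s + 1 =>
      Daux sc tb P pt H k s ∪
        univ.filter fun d =>
          ∃ l, 1 ≤ l ∧ l < k ∧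
            (∃ d' ∈ Daux sc tb P pt H k s,
              stageVote sc tb P H l d < stageVote sc tb P H l d') ∧
            (∃ d' ∈ Daux sc tb P pt H k s,
              stageVote sc tb P H (l + 1) d' < stageVote sc tb P H (l + 1) d)

/-- `D^i = ⋃ₛ D^i_s`. -/
noncomputable def Dset (sc : ℕ → ℤ) (tb : O → ℕ) (P : List (O → ℕ)) (pt : O → ℕ)
    (H : Finset O) (k : ℕ) : Finset O :=
  univ.filter fun d => ∃ s, d ∈ Daux sc tb P pt H k s

/-- The Borda scoring vector `(m-1, m-2, …, 1, 0)`: position `j` gets `j` points. -/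
def bordaVec : ℕ → ℤ := fun j => (j : ℤ)

/-- The `x`-approval scoring vector for `m` candidates: the `x` highest positions get one
point, the rest get zero. -/
def approvalVec (m x : ℕ) : ℕ → ℤ := fun j => if m ≤ j + x then 1 else 0

/-- `sc` is a scoring vector for `m` candidates: `s_{m-1} ≥ … ≥ s_0 ≥ 0` and
`s_{m-1} > s_0`. -/
def IsScoringVector (m : ℕ) (sc : ℕ → ℤ) : Prop :=
  (∀ j, j + 1 < m → sc j ≤ sc (j + 1)) ∧ 0 ≤ sc 0 ∧ sc 0 < sc (m - 1)

/-- Algorithm 1 (constructive single-voter manipulation) returns the vote `pa`: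
the guard `pos(p, p_o) ≥ ⌈m/2⌉` holds and `pa` is the vote built at the first iteration
`i ∈ {1, …, ⌈m/2⌉}` at which the manipulation check succeeds. -/
def alg1Returns (sc : ℕ → ℤ) (tb : O → ℕ) (P : List (O → ℕ)) (po : O → ℕ) (p : O)
    (pa : O → ℕ) : Prop :=
  (Fintype.card O + 1) / 2 ≤ po p ∧
    ∃ i, 1 ≤ i ∧ i ≤ (Fintype.card O + 1) / 2 ∧
      pa = buildVote (swf sc tb P) (Hset (swf sc tb P) po p i) ∧
      RC (swf sc tb (P ++ [pa])) po = {p} ∧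
      ∀ j, 1 ≤ j → j < i →
        RC (swf sc tb (P ++ [buildVote (swf sc tb P) (Hset (swf sc tb P) po p j)])) po ≠
          {p}

/-- Algorithm 2 (constructive coalitional manipulation) run with `k` manipulators returns
the profile `PM`: the guard `pos(p, p_o) ≥ ⌈m/2⌉` holds and `PM` is the `k`-stage profile
built at the first iteration `i ∈ {1, …, ⌈m/2⌉}` at which the manipulation check succeeds. -/
def alg2Returns (sc : ℕ → ℤ) (tb : O → ℕ) (P : List (O → ℕ)) (po : O → ℕ) (p : O)
    (k : ℕ) (PM : List (O → ℕ)) : Prop :=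
  (Fintype.card O + 1) / 2 ≤ po p ∧
    ∃ i, 1 ≤ i ∧ i ≤ (Fintype.card O + 1) / 2 ∧
      PM = stageProfile sc tb P (Hset (swf sc tb P) po p i) k ∧
      RC (swf sc tb (P ++ PM)) po = {p} ∧
      ∀ j, 1 ≤ j → j < i →
        RC (swf sc tb (P ++ stageProfile sc tb P (Hset (swf sc tb P) po p j) k)) po ≠ {p}

/-- The modified Algorithm 1 (destructive single-voter manipulation) returns the vote
`pa`: the guard `pos(e, p_o) < ⌊m/2⌋` fails and `pa` is the vote built at the first
iteration `i ∈ {1, …, ⌈m/2⌉}` at which `e` is excluded from the Rational Compromise. -/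
def alg1ReturnsD (sc : ℕ → ℤ) (tb : O → ℕ) (P : List (O → ℕ)) (po : O → ℕ) (e : O)
    (pa : O → ℕ) : Prop :=
  Fintype.card O / 2 ≤ po e ∧
    ∃ i, 1 ≤ i ∧ i ≤ (Fintype.card O + 1) / 2 ∧
      pa = buildVote (swf sc tb P) (HsetD (swf sc tb P) po e i) ∧
      e ∉ RC (swf sc tb (P ++ [pa])) po ∧
      ∀ j, 1 ≤ j → j < i →
        e ∈ RC (swf sc tb (P ++ [buildVote (swf sc tb P) (HsetD (swf sc tb P) po e j)])) po

/-- The modified Algorithm 2 (destructive coalitional manipulation) run with `k`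
manipulators returns the profile `PM`: the guard `pos(e, p_o) < ⌊m/2⌋` fails and `PM` is
the `k`-stage profile built at the first iteration `i ∈ {1, …, ⌈m/2⌉}` at which `e` is
excluded from the Rational Compromise. -/
def alg2ReturnsD (sc : ℕ → ℤ) (tb : O → ℕ) (P : List (O → ℕ)) (po : O → ℕ) (e : O)
    (k : ℕ) (PM : List (O → ℕ)) : Prop :=
  Fintype.card O / 2 ≤ po e ∧
    ∃ i, 1 ≤ i ∧ i ≤ (Fintype.card O + 1) / 2 ∧
      PM = stageProfile sc tb P (HsetD (swf sc tb P) po e i) k ∧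
      e ∉ RC (swf sc tb (P ++ PM)) po ∧
      ∀ j, 1 ≤ j → j < i →
        e ∈ RC (swf sc tb (P ++ stageProfile sc tb P (HsetD (swf sc tb P) po e j) k)) po

/-- The set `U^i` arising from running the `k` stages of Algorithm 2 at iteration `i`. -/
noncomputable def UsetAlg (sc : ℕ → ℤ) (tb : O → ℕ) (P : List (O → ℕ)) (po : O → ℕ)
    (p : O) (i k : ℕ) : Finset O :=
  Uset sc tb P (swf sc tb P) (Hset (swf sc tb P) po p i) k

/-- The set `D^i` arising from running the `k` stages of Algorithm 2 at iteration `i`. -/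
noncomputable def DsetAlg (sc : ℕ → ℤ) (tb : O → ℕ) (P : List (O → ℕ)) (po : O → ℕ)
    (p : O) (i k : ℕ) : Finset O :=
  Dset sc tb P (swf sc tb P) (Hset (swf sc tb P) po p i) k

/-- The vote constructed at stage `ℓ` of iteration `i` of Algorithm 2. -/
def stageVoteAlg (sc : ℕ → ℤ) (tb : O → ℕ) (P : List (O → ℕ)) (po : O → ℕ)
    (p : O) (i ℓ : ℕ) : O → ℕ :=
  stageVote sc tb P (Hset (swf sc tb P) po p i) ℓ

/-- `s_ℓ(c)`: the total score of candidate `c` in `F(p⃗ ∪ p⃗_M)` after stage `ℓ` of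
iteration `i` of Algorithm 2. -/
def stageScoreAlg (sc : ℕ → ℤ) (tb : O → ℕ) (P : List (O → ℕ)) (po : O → ℕ)
    (p : O) (i ℓ : ℕ) (c : O) : ℤ :=
  score sc (P ++ stageProfile sc tb P (Hset (swf sc tb P) po p i) ℓ) c

/-- `F(p⃗ ∪ p⃗_M)` after stage `ℓ` of iteration `i` of Algorithm 2. -/
def stageSwfAlg (sc : ℕ → ℤ) (tb : O → ℕ) (P : List (O → ℕ)) (po : O → ℕ)
    (p : O) (i ℓ : ℕ) : O → ℕ :=
  swf sc tb (P ++ stageProfile sc tb P (Hset (swf sc tb P) po p i) ℓ)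

/-- A finite set of integers is 1-dense if, when sorted non-increasingly, consecutive
elements differ by at most one; equivalently, every non-maximal element is within one of
the next larger element. -/
def OneDense (B : Finset ℤ) : Prop :=
  ∀ b ∈ B, (∃ c ∈ B, b < c) → ∃ c ∈ B, b < c ∧ c ≤ b + 1

/-- The social ranking compares candidates by score, then by the tie-breaking order. -/
lemma swf_lt_iff {sc : ℕ → ℤ} {tb : O → ℕ} (htb : Function.Injective tb)
    (P : List (O → ℕ)) (x y : O) :
    swf sc tb P x < swf sc tb P y ↔
      score sc P x < score sc P y ∨ (score sc P x = score sc P y ∧ tb y < tb x) := by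
  have key : ∀ x y : O,
      (score sc P x < score sc P y ∨ (score sc P x = score sc P y ∧ tb y < tb x)) →
        swf sc tb P x < swf sc tb P y := by
    intro x y h
    apply Finset.card_lt_card
    rw [Finset.ssubset_iff_of_subset]
    · exact ⟨x, by simpa using h, by simp⟩
    · intro z hz
      simp only [mem_filter, mem_univ, true_and] at hz ⊢
      omega
  refine ⟨fun h => ?_, key x y⟩
  by_contra hn
  by_cases hxy : x = y
  · subst hxy
    exact lt_irrefl _ h
  · have hne : tb x ≠ tb y := fun e => hxy (htb e)
    have := key y x (by omega)
    omega

lemma swf_injective {sc : ℕ → ℤ} {tb : O → ℕ} (htb : Function.Injective tb)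
    (P : List (O → ℕ)) : Function.Injective (swf sc tb P) := by
  intro x y h
  by_contra hxy
  have hne : tb x ≠ tb y := fun e => hxy (htb e)
  have h1 := swf_lt_iff (sc := sc) htb P x y
  have h2 := swf_lt_iff (sc := sc) htb P y x
  omega

lemma buildVote_lt_of_notMem_of_mem (r : O → ℕ) {H : Finset O} {x y : O}
    (hx : x ∉ H) (hy : y ∈ H) : buildVote r H x < buildVote r H y := by
  have h : (univ.filter fun c => c ∉ H ∧ r x < r c).card < (Hᶜ).card := by
    apply Finset.card_lt_card
    rw [Finset.ssubset_iff_of_subset]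
    · exact ⟨x, by simpa using hx, by simp⟩
    · intro z hz
      simp only [mem_filter, mem_univ, true_and, mem_compl] at hz ⊢
      exact hz.1
  rw [Finset.card_compl] at h
  simp only [buildVote, if_neg hx, if_pos hy]
  omega

/-- A group listed in reverse order of `r` is compared in reverse order of `r`. -/
lemma card_filter_lt_iff (r : O → ℕ) {K : Finset O} {x y : O} (hx : x ∈ K) :
    (K.filter fun h => r x < r h).card < (K.filter fun h => r y < r h).card ↔
      r y < r x := by
  constructor
  · intro h
    by_contra hn
    refine absurd h (not_lt.mpr (Finset.card_le_card fun z hz => ?_))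
    simp only [mem_filter] at hz ⊢
    exact ⟨hz.1, by omega⟩
  · intro h
    apply Finset.card_lt_card
    rw [Finset.ssubset_iff_of_subset]
    · exact ⟨x, by simp [hx, h], by simp⟩
    · intro z hz
      simp only [mem_filter] at hz ⊢
      exact ⟨hz.1, by omega⟩

lemma buildVote_of_mem (r : O → ℕ) {H : Finset O} {x : O} (hx : x ∈ H) :
    buildVote r H x = Fintype.card O - H.card + (H.filter fun h => r x < r h).card :=
  if_pos hx

lemma buildVote_of_notMem (r : O → ℕ) {H : Finset O} {x : O} (hx : x ∉ H) :
    buildVote r H x = ((univ \ H).filter fun h => r x < r h).card := by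
  rw [buildVote, if_neg hx]
  congr 1
  ext z
  simp

lemma buildVote_lt_iff_of_mem (r : O → ℕ) {H : Finset O} {x y : O}
    (hx : x ∈ H) (hy : y ∈ H) : buildVote r H x < buildVote r H y ↔ r y < r x := by
  rw [buildVote_of_mem r hx, buildVote_of_mem r hy, add_lt_add_iff_left,
    card_filter_lt_iff r hx]

lemma buildVote_lt_iff_of_notMem (r : O → ℕ) {H : Finset O} {x y : O}
    (hx : x ∉ H) (hy : y ∉ H) : buildVote r H x < buildVote r H y ↔ r y < r x := by
  rw [buildVote_of_notMem r hx, buildVote_of_notMem r hy,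
    card_filter_lt_iff r (by simpa using hx)]

/-- After the members of `K` receive points in reverse order of `r`, every score between
those of two members is attained by a member lying between them in `r`. -/
lemma exists_score_eq_between {K : Finset O} {r : O → ℕ} {s s' : O → ℤ} {c : ℤ}
    (hr : Function.Injective r) (hrs : ∀ x y, r x < r y → s x ≤ s y)
    (hs' : ∀ x ∈ K, s' x = s x + c + ((K.filter fun h => r x < r h).card : ℤ))
    {a b : O} (ha : a ∈ K) (hb : b ∈ K) (hab : r a ≤ r b) {v : ℤ}
    (hbv : s' b ≤ v) (hva : v ≤ s' a) :
    ∃ z ∈ K, r a ≤ r z ∧ r z ≤ r b ∧ s' z = v := by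
  obtain ⟨z, hz, hzmax⟩ := Finset.exists_max_image
    (K.filter fun z => r a ≤ r z ∧ r z ≤ r b ∧ v ≤ s' z) r ⟨a, by simp [ha, hab, hva]⟩
  simp only [mem_filter] at hz hzmax
  obtain ⟨hzK, haz, hzb, hvz⟩ := hz
  refine ⟨z, hzK, haz, hzb, le_antisymm ?_ hvz⟩
  by_contra hlt
  have hzb' : r z < r b := by
    refine lt_of_le_of_ne hzb fun e => ?_
    rw [hr e] at hlt
    exact hlt hbv
  obtain ⟨y, hy, hymin⟩ := Finset.exists_min_image
    (K.filter fun y => r z < r y) r ⟨b, by simp [hb, hzb']⟩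
  simp only [mem_filter] at hy hymin
  have hyb : r y ≤ r b := hymin b ⟨hb, hzb'⟩
  have hyv : s' y < v := by
    by_contra h
    have := hzmax y ⟨hy.1, by omega, hyb, by omega⟩
    omega
  have hcard : (K.filter fun h => r z < r h).card
      = (K.filter fun h => r y < r h).card + 1 := by
    have hins : (K.filter fun h => r z < r h)
        = insert y (K.filter fun h => r y < r h) := by
      ext w
      simp only [mem_filter, mem_insert]
      constructor
      · rintro ⟨hw, hzw⟩
        rcases (hymin w ⟨hw, hzw⟩).eq_or_lt with e | h
        · exact Or.inl (hr e).symm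
        · exact Or.inr ⟨hw, h⟩
      · rintro (rfl | ⟨hw, hyw⟩)
        · exact hy
        · exact ⟨hw, by omega⟩
    rw [hins, Finset.card_insert_of_notMem (by simp)]
  have h1 := hs' z hzK
  have h2 := hs' y hy.1
  have h3 := hrs z y hy.2
  rw [hcard] at h1
  push_cast at h1
  omega

/-- A gap of at least two between two groups after a stage was already present before it,
provided every candidate passing between the groups belongs to one of them. -/
lemma gap_of_gap_succ {K A B : Finset O} {r : O → ℕ} {s s' : O → ℤ} {c : ℤ}
    (hr : Function.Injective r) (hrs : ∀ x y, r x < r y → s x ≤ s y)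
    (hs' : ∀ x ∈ K, s' x = s x + c + ((K.filter fun h => r x < r h).card : ℤ))
    (hA : A ⊆ K) (hB : B ⊆ K)
    (hclosed : ∀ z ∈ K, ∀ a ∈ A, ∀ b ∈ B, ∀ b' ∈ B, r a < r z → r z < r b →
      s' b' < s' z → s' z < s' a → z ∈ A ∪ B)
    (hgap : ∀ a ∈ A, ∀ b ∈ B, s' b + 2 ≤ s' a) :
    ∀ a ∈ A, ∀ b ∈ B, s b + 2 ≤ s a := by
  intro a ha b hb
  have haK := hA ha
  have hbK := hB hb
  have hg := hgap a ha b hb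
  have hsa := hs' a haK
  have hsb := hs' b hbK
  rcases lt_or_ge (r b) (r a) with hlt | hle
  · have := (card_filter_lt_iff r haK).mpr hlt
    omega
  · exfalso
    obtain ⟨b', hb', hmax⟩ := Finset.exists_max_image B s' ⟨b, hb⟩
    have hg' := hgap a ha b' hb'
    have hbb' := hmax b hb
    obtain ⟨z, hzK, haz, hzb, hz⟩ := exists_score_eq_between hr hrs hs' haK hbK hle
      (v := s' b' + 1) (by omega) (by omega)
    have haz' : r a < r z := by
      refine lt_of_le_of_ne haz fun e => ?_
      rw [← hr e] at hz
      omega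
    have hzb' : r z < r b := by
      refine lt_of_le_of_ne hzb fun e => ?_
      rw [hr e] at hz
      omega
    have hmem := hclosed z hzK a ha b hb b' hb' haz' hzb' (by omega) (by omega)
    rcases Finset.mem_union.mp hmem with h | h
    · have := hgap z h b' hb'
      omega
    · have := hmax z h
      omega

/-- If no partition of `W` keeps a gap of two through all the stages, then the final scores
of `W` are 1-dense. -/
lemma oneDense_image_of_no_persistent_gap {K W : Finset O} {r : ℕ → O → ℕ}
    {s : ℕ → O → ℤ} {c : ℤ} {T : ℕ}
    (hr : ∀ t, Function.Injective (r t)) (hrs : ∀ t x y, r t x < r t y → s t x ≤ s t y)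
    (hs : ∀ t, ∀ x ∈ K,
      s (t + 1) x = s t x + c + ((K.filter fun h => r t x < r t h).card : ℤ))
    (hW : W ⊆ K)
    (hclosed : ∀ t < T, ∀ z ∈ K, ∀ a ∈ W, ∀ b ∈ W, ∀ b' ∈ W, r t a < r t z →
      r t z < r t b → s (t + 1) b' < s (t + 1) z → s (t + 1) z < s (t + 1) a → z ∈ W)
    (hsplit : ∀ A B : Finset O, A ∪ B = W → A.Nonempty → B.Nonempty →
      ¬ ∀ t ≤ T, ∀ a ∈ A, ∀ b ∈ B, s t b + 2 ≤ s t a) :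
    OneDense (W.image (s T)) := by
  rintro v hv ⟨w, hw, hvw⟩
  by_contra hno
  obtain ⟨x, hx, rfl⟩ := Finset.mem_image.mp hv
  obtain ⟨y, hy, rfl⟩ := Finset.mem_image.mp hw
  have hAB : (W.filter fun u => s T x < s T u) ∪ (W.filter fun u => s T u ≤ s T x) = W := by
    ext u
    simp only [mem_union, mem_filter, ← and_or_left]
    exact and_iff_left (lt_or_ge _ _)
  refine hsplit _ _ hAB ⟨y, by simp [hy, hvw]⟩ ⟨x, by simp [hx]⟩ fun t ht => ?_
  induction ht using Nat.decreasingInduction with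
  | self =>
    intro a ha b hb
    simp only [mem_filter] at ha hb
    by_contra h
    exact hno ⟨s T a, Finset.mem_image_of_mem _ ha.1, ha.2, by omega⟩
  | of_succ t ht ih =>
    refine gap_of_gap_succ (hr t) (hrs t) (hs t) ((Finset.filter_subset _ _).trans hW)
      ((Finset.filter_subset _ _).trans hW) (fun z hz a ha b hb b' hb' => ?_) ih
    rw [hAB]
    exact hclosed t ht z hz a (Finset.mem_of_mem_filter _ ha) b
      (Finset.mem_of_mem_filter _ hb) b' (Finset.mem_of_mem_filter _ hb')

lemma score_stageProfile_succ (tb : O → ℕ) (P : List (O → ℕ)) (H : Finset O) (t : ℕ)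
    (x : O) :
    score bordaVec (P ++ stageProfile bordaVec tb P H (t + 1)) x =
      score bordaVec (P ++ stageProfile bordaVec tb P H t) x +
        (buildVote (swf bordaVec tb (P ++ stageProfile bordaVec tb P H t)) H x : ℤ) := by
  simp [score, stageProfile, bordaVec, add_assoc]

lemma score_le_of_swf_lt {sc : ℕ → ℤ} {tb : O → ℕ} (htb : Function.Injective tb)
    (P : List (O → ℕ)) (x y : O) (h : swf sc tb P x < swf sc tb P y) :
    score sc P x ≤ score sc P y := by
  have := (swf_lt_iff htb P x y).mp h
  omega

section Closure

variable {sc : ℕ → ℤ} {tb : O → ℕ} {P : List (O → ℕ)} {pt : O → ℕ} {H : Finset O} {k : ℕ}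

lemma Uaux_mono : Monotone (Uaux sc tb P pt H k) :=
  monotone_nat_of_le_succ fun _ => Finset.subset_union_left

lemma Daux_mono : Monotone (Daux sc tb P pt H k) :=
  monotone_nat_of_le_succ fun _ => Finset.subset_union_left

lemma Uaux_subset (n : ℕ) : Uaux sc tb P pt H k n ⊆ H := by
  induction n with
  | zero => exact Finset.filter_subset _ _
  | succ n ih =>
    refine Finset.union_subset ih fun u hu => ?_
    obtain ⟨l, -, -, ⟨u', hu', hlt⟩, -⟩ := (Finset.mem_filter.mp hu).2
    by_contra hn
    exact lt_asymm hlt (buildVote_lt_of_notMem_of_mem _ hn (ih hu'))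

lemma Daux_subset (n : ℕ) : Daux sc tb P pt H k n ⊆ univ \ H := by
  induction n with
  | zero => exact Finset.filter_subset _ _
  | succ n ih =>
    refine Finset.union_subset ih fun d hd => ?_
    obtain ⟨l, -, -, ⟨d', hd', hlt⟩, -⟩ := (Finset.mem_filter.mp hd).2
    have hd'H : d' ∉ H := by simpa using ih hd'
    by_contra hn
    have hdH : d ∈ H := by simpa using hn
    exact lt_asymm hlt (buildVote_lt_of_notMem_of_mem _ hd'H hdH)

lemma Uset_subset : Uset sc tb P pt H k ⊆ H := by
  intro u hu
  obtain ⟨n, hn⟩ := (Finset.mem_filter.mp hu).2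
  exact Uaux_subset n hn

lemma Dset_subset : Dset sc tb P pt H k ⊆ univ \ H := by
  intro d hd
  obtain ⟨n, hn⟩ := (Finset.mem_filter.mp hd).2
  exact Daux_subset n hn

lemma Uaux_subset_Uset (n : ℕ) : Uaux sc tb P pt H k n ⊆ Uset sc tb P pt H k :=
  fun _ hu => Finset.mem_filter.mpr ⟨Finset.mem_univ _, n, hu⟩

lemma Daux_subset_Dset (n : ℕ) : Daux sc tb P pt H k n ⊆ Dset sc tb P pt H k :=
  fun _ hd => Finset.mem_filter.mpr ⟨Finset.mem_univ _, n, hd⟩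

lemma mem_Uset_of_overtakes {u u' u'' : O} {l : ℕ} (hl : 1 ≤ l) (hlk : l < k)
    (hu' : u' ∈ Uset sc tb P pt H k) (hu'' : u'' ∈ Uset sc tb P pt H k)
    (h1 : stageVote sc tb P H l u' < stageVote sc tb P H l u)
    (h2 : stageVote sc tb P H (l + 1) u < stageVote sc tb P H (l + 1) u'') :
    u ∈ Uset sc tb P pt H k := by
  obtain ⟨n, hn⟩ := (Finset.mem_filter.mp hu').2
  obtain ⟨n', hn'⟩ := (Finset.mem_filter.mp hu'').2
  refine Uaux_subset_Uset (max n n' + 1) (Finset.mem_union_right _ ?_)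
  exact Finset.mem_filter.mpr ⟨Finset.mem_univ _, l, hl, hlk,
    ⟨u', Uaux_mono (le_max_left n n') hn, h1⟩, ⟨u'', Uaux_mono (le_max_right n n') hn', h2⟩⟩

lemma mem_Dset_of_overtaken {d d' d'' : O} {l : ℕ} (hl : 1 ≤ l) (hlk : l < k)
    (hd' : d' ∈ Dset sc tb P pt H k) (hd'' : d'' ∈ Dset sc tb P pt H k)
    (h1 : stageVote sc tb P H l d < stageVote sc tb P H l d')
    (h2 : stageVote sc tb P H (l + 1) d'' < stageVote sc tb P H (l + 1) d) :
    d ∈ Dset sc tb P pt H k := by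
  obtain ⟨n, hn⟩ := (Finset.mem_filter.mp hd').2
  obtain ⟨n', hn'⟩ := (Finset.mem_filter.mp hd'').2
  refine Daux_subset_Dset (max n n' + 1) (Finset.mem_union_right _ ?_)
  exact Finset.mem_filter.mpr ⟨Finset.mem_univ _, l, hl, hlk,
    ⟨d', Daux_mono (le_max_left n n') hn, h1⟩, ⟨d'', Daux_mono (le_max_right n n') hn', h2⟩⟩

end Closure

lemma oneDense_image_Uset {k : ℕ} (hk : 1 ≤ k) {tb : O → ℕ}
    (htb : Function.Injective tb) (P : List (O → ℕ)) (H : Finset O) :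
    OneDense ((Uset bordaVec tb P (swf bordaVec tb P) H k).image
      (score bordaVec (P ++ stageProfile bordaVec tb P H (k - 1)))) := by
  refine oneDense_image_of_no_persistent_gap (K := H) (T := k - 1)
    (r := fun t => swf bordaVec tb (P ++ stageProfile bordaVec tb P H t))
    (s := fun t => score bordaVec (P ++ stageProfile bordaVec tb P H t))
    (c := ((Fintype.card O - H.card : ℕ) : ℤ))
    (fun t => swf_injective htb _) (fun t => score_le_of_swf_lt htb _) ?_ Uset_subset ?_ ?_
  · intro t x hx
    rw [score_stageProfile_succ, buildVote_of_mem _ hx]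
    push_cast
    ring
  · intro t ht z hz a ha b hb b' hb' haz hzb hbz hza
    refine mem_Uset_of_overtakes (l := t + 1) (by omega) (by omega) hb hb' ?_ ?_
    · exact (buildVote_lt_iff_of_mem _ (Uset_subset hb) hz).mpr hzb
    · exact (buildVote_lt_iff_of_mem _ hz (Uset_subset hb')).mpr
        ((swf_lt_iff htb _ _ _).mpr (Or.inl hbz))
  · rintro A B hAB ⟨a, ha⟩ ⟨b, hb⟩ hgap
    have hbelow : ∀ t ≤ k - 1, ∀ a ∈ A, ∀ b ∈ B,
        swf bordaVec tb (P ++ stageProfile bordaVec tb P H t) b <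
          swf bordaVec tb (P ++ stageProfile bordaVec tb P H t) a := by
      intro t ht a ha b hb
      have := hgap t ht a ha b hb
      exact (swf_lt_iff htb _ _ _).mpr (Or.inl (by omega))
    have hdisj : ∀ n, ∀ u ∈ Uaux bordaVec tb P (swf bordaVec tb P) H k n, u ∉ A := by
      intro n
      induction n with
      | zero =>
        intro u hu huA
        have hbH : b ∈ H := Uset_subset (hAB ▸ Finset.mem_union_right A hb)
        have hcard := Nat.lt_one_iff.mp (Finset.mem_filter.mp hu).2
        have hlt := hbelow 0 (Nat.zero_le _) u huA b hb
        simp only [stageProfile, List.append_nil] at hlt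
        exact Finset.filter_eq_empty_iff.mp (Finset.card_eq_zero.mp hcard) hbH hlt
      | succ n ih =>
        intro u hu huA
        rcases Finset.mem_union.mp hu with hu | hu
        · exact ih u hu huA
        · obtain ⟨l, hl, hlk, ⟨u', hu', hlt⟩, -⟩ := (Finset.mem_filter.mp hu).2
          have hu'B : u' ∈ B := (Finset.mem_union.mp
            (hAB.symm ▸ Uaux_subset_Uset n hu' : u' ∈ A ∪ B)).resolve_left (ih u' hu')
          have huH : u ∈ H := Uset_subset (hAB ▸ Finset.mem_union_left B huA)
          have := (buildVote_lt_iff_of_mem _ (Uaux_subset n hu') huH).mp hlt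
          exact lt_asymm this (hbelow (l - 1) (by omega) u huA u' hu'B)
    have haU : a ∈ Uset bordaVec tb P (swf bordaVec tb P) H k :=
      hAB ▸ Finset.mem_union_left B ha
    obtain ⟨n, hn⟩ := (Finset.mem_filter.mp haU).2
    exact hdisj n a hn ha

lemma oneDense_image_Dset {k : ℕ} (hk : 1 ≤ k) {tb : O → ℕ}
    (htb : Function.Injective tb) (P : List (O → ℕ)) (H : Finset O) :
    OneDense ((Dset bordaVec tb P (swf bordaVec tb P) H k).image
      (score bordaVec (P ++ stageProfile bordaVec tb P H (k - 1)))) := by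
  have hnot : ∀ {x : O}, x ∈ Dset bordaVec tb P (swf bordaVec tb P) H k → x ∉ H :=
    fun hx => (Finset.mem_sdiff.mp (Dset_subset hx)).2
  refine oneDense_image_of_no_persistent_gap (K := univ \ H) (T := k - 1)
    (r := fun t => swf bordaVec tb (P ++ stageProfile bordaVec tb P H t))
    (s := fun t => score bordaVec (P ++ stageProfile bordaVec tb P H t)) (c := 0)
    (fun t => swf_injective htb _) (fun t => score_le_of_swf_lt htb _) ?_ Dset_subset ?_ ?_
  · intro t x hx
    rw [score_stageProfile_succ, buildVote_of_notMem _ (Finset.mem_sdiff.mp hx).2, add_zero]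
  · intro t ht z hz a ha b hb b' hb' haz hzb hbz hza
    have hzH := (Finset.mem_sdiff.mp hz).2
    refine mem_Dset_of_overtaken (l := t + 1) (by omega) (by omega) ha ha ?_ ?_
    · exact (buildVote_lt_iff_of_notMem _ hzH (hnot ha)).mpr haz
    · exact (buildVote_lt_iff_of_notMem _ (hnot ha) hzH).mpr
        ((swf_lt_iff htb _ _ _).mpr (Or.inl hza))
  · rintro A B hAB ⟨a, ha⟩ ⟨b, hb⟩ hgap
    have hbelow : ∀ t ≤ k - 1, ∀ a ∈ A, ∀ b ∈ B,
        swf bordaVec tb (P ++ stageProfile bordaVec tb P H t) b <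
          swf bordaVec tb (P ++ stageProfile bordaVec tb P H t) a := by
      intro t ht a ha b hb
      have := hgap t ht a ha b hb
      exact (swf_lt_iff htb _ _ _).mpr (Or.inl (by omega))
    have hdisj : ∀ n, ∀ d ∈ Daux bordaVec tb P (swf bordaVec tb P) H k n, d ∉ B := by
      intro n
      induction n with
      | zero =>
        intro d hd hdB
        have haK : a ∈ univ \ H := Dset_subset (hAB ▸ Finset.mem_union_left B ha)
        have hcard := Nat.lt_one_iff.mp (Finset.mem_filter.mp hd).2
        have hlt := hbelow 0 (Nat.zero_le _) a ha d hdB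
        simp only [stageProfile, List.append_nil] at hlt
        exact Finset.filter_eq_empty_iff.mp (Finset.card_eq_zero.mp hcard) haK hlt
      | succ n ih =>
        intro d hd hdB
        rcases Finset.mem_union.mp hd with hd | hd
        · exact ih d hd hdB
        · obtain ⟨l, hl, hlk, ⟨d', hd', hlt⟩, -⟩ := (Finset.mem_filter.mp hd).2
          have hd'D := Daux_subset_Dset n hd'
          have hd'A : d' ∈ A := (Finset.mem_union.mp
            (hAB.symm ▸ hd'D : d' ∈ A ∪ B)).resolve_right (ih d' hd')
          have hdH : d ∉ H := hnot (hAB ▸ Finset.mem_union_right A hdB)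
          have := (buildVote_lt_iff_of_notMem _ hdH (hnot hd'D)).mp hlt
          exact lt_asymm this (hbelow (l - 1) (by omega) d' hd'A d hdB)
    have hbD : b ∈ Dset bordaVec tb P (swf bordaVec tb P) H k :=
      hAB ▸ Finset.mem_union_right A hb
    obtain ⟨n, hn⟩ := (Finset.mem_filter.mp hbD).2
    exact hdisj n b hn hb


/-- Lemma 10: run Algorithm 2 with the Borda rule and `k` manipulators at a
fixed iteration `i`; the sets of scores `{s_{k−1}(u) : u ∈ U^i}` and
`{s_{k−1}(d) : d ∈ D^i}` after stage `k − 1` are 1-dense. -/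
theorem lemma10_one_dense
    (k : ℕ) (hk : 1 ≤ k) (tb : O → ℕ) (P : List (O → ℕ)) (po : O → ℕ) (p : O) (i : ℕ)
    (htb : Function.Injective tb) (hP : ∀ q ∈ P, IsVote q) (hpo : IsVote po)
    (hi1 : 1 ≤ i) (hi2 : i ≤ (Fintype.card O + 1) / 2) :
    OneDense ((UsetAlg bordaVec tb P po p i k).image
        (stageScoreAlg bordaVec tb P po p i (k - 1))) ∧
      OneDense ((DsetAlg bordaVec tb P po p i k).image
        (stageScoreAlg bordaVec tb P po p i (k - 1))) := by
  exact ⟨oneDense_image_Uset hk htb P _, oneDense_image_Dset hk htb P _⟩
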